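/- arXiv:1511.01114 — 2 statements merged into one kernel-verified Lean document; each statement's English description precedes it below -/
import Mathlib

section
/- Let 1 < p < 2 and u_p(x) := -sin_p(π_p x)^{p-1} cos_p(π_p x)^{2-p}. Then u_p is strictly decreasing on [0, m_p] and strictly increasing on [m_p, 1/2], where m_p ∈ (0, 1/2) is the unique point with cos_p(π_p m_p)^p = 2 - p. -/
open Real Set

noncomputable def Fp (p y : ℝ) : ℝ := ∫ t in (0:ℝ)..y, (1 - t ^ p) ^ (-(1/p))

noncomputable def pip (p : ℝ) : ℝ := 2 * Fp p 1

theorem aux_int (p : ℝ) (hp1 : 1 < p) :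
    IntervalIntegrable (fun t : ℝ => (1 - t ^ p) ^ (-(1/p))) MeasureTheory.volume 0 1 := by
  have hp0 : 0 < p := by linarith
  have hlt : 1 / p < 1 := by rw [div_lt_one hp0]; exact hp1
  have h1 : IntervalIntegrable (fun t : ℝ => t ^ (-(1/p))) MeasureTheory.volume 0 1 :=
    intervalIntegral.intervalIntegrable_rpow' (by linarith)
  have h2 := (h1.comp_sub_left 1).symm
  norm_num at h2
  refine h2.mono_fun ?_ ?_
  · apply Measurable.aestronglyMeasurable
    fun_prop
  · rw [Filter.EventuallyLE, MeasureTheory.ae_restrict_iff' measurableSet_uIoc]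
    have hne : ∀ᵐ t : ℝ, t ≠ 1 := by
      simp [MeasureTheory.ae_iff]
    filter_upwards [hne] with t ht1 ht
    rw [uIoc_of_le zero_le_one] at ht
    have htl : t < 1 := lt_of_le_of_ne ht.2 ht1
    have h3 : t ^ p ≤ t := by
      have := Real.rpow_le_rpow_of_exponent_ge ht.1 ht.2 hp1.le
      simpa using this
    have e1 : 0 ≤ (1 - t ^ p) ^ (-(1/p)) := Real.rpow_nonneg (by linarith) _
    have e2 : 0 ≤ (1 - t) ^ (-(1/p)) := Real.rpow_nonneg (by linarith) _
    have := Real.rpow_le_rpow_of_nonpos (x := 1 - t) (y := 1 - t ^ p) (z := -(1/p))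
      (by linarith) (by linarith) (by have : 0 < 1/p := by positivity
                                      linarith)
    rw [Real.norm_of_nonneg e1, Real.norm_of_nonneg (by simpa using e2)]
    simpa using this

theorem aux_cont (p : ℝ) (hp1 : 1 < p) : ContinuousOn (Fp p) (Icc 0 1) := by
  have := intervalIntegral.continuousOn_primitive_interval' (aux_int p hp1)
    (a := 0) (by simp)
  rw [uIcc_of_le zero_le_one] at this
  exact this

theorem aux_deriv (p : ℝ) (hp1 : 1 < p) (y : ℝ) (hy : y ∈ Ioo (0:ℝ) 1) :
    HasDerivAt (Fp p) ((1 - y ^ p) ^ (-(1/p))) y := by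
  have hlt : y ^ p < 1 := Real.rpow_lt_one hy.1.le hy.2 (by linarith)
  apply intervalIntegral.integral_hasDerivAt_right
  · apply (aux_int p hp1).mono_set
    rw [uIcc_of_le zero_le_one, uIcc_of_le hy.1.le]
    exact Icc_subset_Icc_right hy.2.le
  · apply Measurable.stronglyMeasurable _ |>.stronglyMeasurableAtFilter
    fun_prop
  · apply ContinuousAt.rpow_const
    · exact continuousAt_const.sub (continuousAt_id.rpow_const (Or.inl hy.1.ne'))
    · exact Or.inl (by linarith : (0:ℝ) < 1 - y ^ p).ne'

theorem aux_mono (p : ℝ) (hp1 : 1 < p) : StrictMonoOn (Fp p) (Icc 0 1) := by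
  apply strictMonoOn_of_deriv_pos (convex_Icc 0 1) (aux_cont p hp1)
  intro y hy
  rw [interior_Icc] at hy
  rw [(aux_deriv p hp1 y hy).deriv]
  have hlt : y ^ p < 1 := Real.rpow_lt_one hy.1.le hy.2 (by linarith)
  apply Real.rpow_pos_of_pos; linarith

theorem aux_h_deriv (p : ℝ) (w : ℝ) (hw : w ∈ Ioo (0:ℝ) 1) :
    deriv (fun w : ℝ => w ^ (p-1) * (1-w) ^ (2-p)) w
      = w ^ (p-2) * (1-w) ^ (1-p) * ((p-1) - w) := by
  have h0 : w ≠ 0 := hw.1.ne'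
  have h1 : 0 < 1 - w := by linarith [hw.2]
  have a := (hasDerivAt_id w).rpow_const (p := p - 1) (Or.inl h0)
  have b := ((hasDerivAt_id w).const_sub 1).rpow_const (p := 2 - p) (Or.inl h1.ne')
  have c := (a.mul b).deriv
  simp only [id] at c
  have e1 : w ^ (p-1) = w ^ (p-2) * w := by
    rw [← Real.rpow_add_one h0]; congr 1; ring
  have e2 : (1-w) ^ (2-p) = (1-w) ^ (1-p) * (1-w) := by
    rw [← Real.rpow_add_one h1.ne']; congr 1; ring
  have e3 : p - 1 - 1 = p - 2 := by ring
  have e4 : 2 - p - 1 = 1 - p := by ring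
  rw [e3, e4, e1, e2] at c
  refine Eq.trans c ?_
  ring

theorem aux_h_cont (p : ℝ) (hp1 : 1 < p) (hp2 : p < 2) :
    Continuous (fun w : ℝ => w ^ (p-1) * (1-w) ^ (2-p)) := by
  apply Continuous.mul
  · exact continuous_id.rpow_const (fun _ => Or.inr (by linarith))
  · exact (continuous_const.sub continuous_id).rpow_const (fun _ => Or.inr (by linarith))

theorem aux_h_mono (p : ℝ) (hp1 : 1 < p) (hp2 : p < 2) :
    StrictMonoOn (fun w : ℝ => w ^ (p-1) * (1-w) ^ (2-p)) (Icc 0 (p-1)) := by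
  apply strictMonoOn_of_deriv_pos (convex_Icc _ _) (aux_h_cont p hp1 hp2).continuousOn
  intro w hw
  rw [interior_Icc] at hw
  rw [aux_h_deriv p w ⟨hw.1, by linarith [hw.2]⟩]
  have := Real.rpow_pos_of_pos hw.1 (p-2)
  have := Real.rpow_pos_of_pos (show 0 < 1 - w by linarith [hw.2]) (1-p)
  have : 0 < p - 1 - w := by linarith [hw.2]
  positivity

theorem aux_h_anti (p : ℝ) (hp1 : 1 < p) (hp2 : p < 2) :
    StrictAntiOn (fun w : ℝ => w ^ (p-1) * (1-w) ^ (2-p)) (Icc (p-1) 1) := by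
  apply strictAntiOn_of_deriv_neg (convex_Icc _ _) (aux_h_cont p hp1 hp2).continuousOn
  intro w hw
  rw [interior_Icc] at hw
  rw [aux_h_deriv p w ⟨by linarith [hw.1], hw.2⟩]
  have := Real.rpow_pos_of_pos (show 0 < w by linarith [hw.1]) (p-2)
  have := Real.rpow_pos_of_pos (show 0 < 1 - w by linarith [hw.2]) (1-p)
  apply mul_neg_of_pos_of_neg
  · positivity
  · linarith [hw.1]

theorem up_monotonicity (p : ℝ) (hp1 : 1 < p) (hp2 : p < 2) (s : ℝ → ℝ)
    (hinv₁ : ∀ y ∈ Icc (0:ℝ) 1, s (Fp p y) = y)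
    (hinv₂ : ∀ x ∈ Icc (0:ℝ) (pip p / 2), Fp p (s x) = x)
    (u : ℝ → ℝ)
    (hu : ∀ x, u x = -(s (pip p * x) ^ (p - 1) * deriv s (pip p * x) ^ (2 - p)))
    (m : ℝ) (hm : m ∈ Ioo (0:ℝ) (1/2))
    (hmp : deriv s (pip p * m) ^ p = 2 - p) :
    StrictAntiOn u (Icc 0 m) ∧ StrictMonoOn u (Icc m (1/2)) := by
  have hp0 : 0 < p := by linarith
  have hF0 : Fp p 0 = 0 := by simp [Fp]
  have hmono := aux_mono p hp1
  have hFpos : 0 < Fp p 1 := by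
    have := hmono (show (0:ℝ) ∈ Icc (0:ℝ) 1 by simp) (show (1:ℝ) ∈ Icc (0:ℝ) 1 by simp) one_pos
    rwa [hF0] at this
  obtain ⟨b, hb⟩ : ∃ b, b = Fp p 1 := ⟨_, rfl⟩
  have hpip : pip p = 2 * b := by rw [pip, hb]
  rw [← hb] at hFpos
  rw [hpip] at hinv₂ hu hmp
  rw [show 2 * b / 2 = b by ring] at hinv₂
  have hs0 : s 0 = 0 := by
    have := hinv₁ 0 (by simp)
    rwa [hF0] at this
  have hsb : s b = 1 := by
    have := hinv₁ 1 (by simp)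
    rwa [← hb] at this
  have hsurj : ∀ x ∈ Icc 0 b, ∃ y ∈ Icc (0:ℝ) 1, Fp p y = x := by
    intro x hx
    have := intermediate_value_Icc zero_le_one (aux_cont p hp1)
    rw [hF0, ← hb] at this
    exact this hx
  have hsmem : ∀ x ∈ Icc 0 b, s x ∈ Icc (0:ℝ) 1 := by
    intro x hx
    obtain ⟨y, hy, rfl⟩ := hsurj x hx
    rwa [hinv₁ y hy]
  have hsmono : StrictMonoOn s (Icc 0 b) := by
    intro x hx y hy hxy
    rw [← hmono.lt_iff_lt (hsmem x hx) (hsmem y hy), hinv₂ x hx, hinv₂ y hy]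
    exact hxy
  have hFmem : ∀ y ∈ Icc (0:ℝ) 1, Fp p y ∈ Icc 0 b := by
    intro y hy
    constructor
    · rw [← hF0]; exact hmono.monotoneOn (by simp) hy hy.1
    · rw [hb]; exact hmono.monotoneOn hy (by simp) hy.2
  have himg : s '' Icc 0 b = Icc 0 1 := by
    ext y
    constructor
    · rintro ⟨x, hx, rfl⟩; exact hsmem x hx
    · intro hy; exact ⟨Fp p y, hFmem y hy, hinv₁ y hy⟩
  have hscont : ContinuousOn s (Ioo 0 b) := by
    intro x hx
    have hsub : ∀ z ∈ Ioo 0 b, ContinuousAt s z := by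
      intro z hz
      apply hsmono.continuousAt_of_image_mem_nhds (Icc_mem_nhds hz.1 hz.2)
      rw [himg]
      apply Icc_mem_nhds
      · rw [← hs0]; exact hsmono ⟨le_rfl, hFpos.le⟩ (Ioo_subset_Icc_self hz) hz.1
      · rw [← hsb]; exact hsmono (Ioo_subset_Icc_self hz) ⟨hFpos.le, le_rfl⟩ hz.2
    exact (hsub x hx).continuousWithinAt
  have hsIoo : ∀ x ∈ Ioo 0 b, s x ∈ Ioo (0:ℝ) 1 := by
    intro x hx
    have hx' := Ioo_subset_Icc_self hx
    constructor
    · rw [← hs0]; exact hsmono ⟨le_rfl, hFpos.le⟩ hx' hx.1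
    · rw [← hsb]; exact hsmono hx' ⟨hFpos.le, le_rfl⟩ hx.2
  have hsd : ∀ x ∈ Ioo 0 b, HasDerivAt s ((1 - s x ^ p) ^ (1/p)) x := by
    intro x hx
    have hy := hsIoo x hx
    have hlt : s x ^ p < 1 := Real.rpow_lt_one hy.1.le hy.2 hp0
    have hc : ContinuousAt s x := hscont.continuousAt (Ioo_mem_nhds hx.1 hx.2)
    have := (aux_deriv p hp1 (s x) hy).of_local_left_inverse hc
      (Real.rpow_pos_of_pos (by linarith) _).ne'
      (by filter_upwards [Icc_mem_nhds hx.1 hx.2] with z hz using hinv₂ z hz)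
    rwa [Real.rpow_neg (by linarith), inv_inv] at this
  have hdb : deriv s b = 0 := by
    by_cases hdiff : DifferentiableAt ℝ s b
    · have h1 : HasDerivWithinAt s 0 (Iic b) b := by
        apply hasDerivWithinAt_Iic_of_tendsto_deriv (s := Ioo 0 b)
        · intro x hx; exact (hsd x hx).differentiableAt.differentiableWithinAt
        · exact hdiff.continuousAt.continuousWithinAt
        · exact Ioo_mem_nhdsLT hFpos
        · have hc : ContinuousAt (fun x => (1 - s x ^ p) ^ (1/p)) b := by
            apply ContinuousAt.rpow_const
            · exact continuousAt_const.sub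
                (hdiff.continuousAt.rpow_const (Or.inr hp0.le))
            · right; positivity
          have ht := hc.tendsto.mono_left (nhdsWithin_le_nhds (s := Iio b))
          have e : (1 - s b ^ p) ^ (1/p) = 0 := by
            rw [hsb, Real.one_rpow, sub_self, Real.zero_rpow]; positivity
          rw [e] at ht
          refine ht.congr' ?_
          filter_upwards [Ioo_mem_nhdsLT hFpos] with x hx
          exact (hsd x hx).deriv.symm
      have h2 := hdiff.hasDerivAt.hasDerivWithinAt (s := Iic b)
      exact (uniqueDiffWithinAt_Iic b).eq_deriv _ h2 h1
    · exact deriv_zero_of_not_differentiableAt hdiff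
  have hder : ∀ x ∈ Ioc 0 b, deriv s x = (1 - s x ^ p) ^ (1/p) := by
    intro x hx
    rcases hx.2.lt_or_eq with h | h
    · exact (hsd x ⟨hx.1, h⟩).deriv
    · rw [h, hdb, hsb, Real.one_rpow, sub_self, Real.zero_rpow]; positivity
  obtain ⟨H, hH⟩ : ∃ H : ℝ → ℝ, H = fun w : ℝ => w ^ (p-1) * (1-w) ^ (2-p) := ⟨_, rfl⟩
  have hHm := aux_h_mono p hp1 hp2
  have hHa := aux_h_anti p hp1 hp2
  rw [← hH] at hHm hHa
  have hHnn : ∀ w ∈ Icc (0:ℝ) 1, 0 ≤ H w := by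
    intro w hw
    rw [hH]
    exact mul_nonneg (Real.rpow_nonneg hw.1 _) (Real.rpow_nonneg (by linarith [hw.2]) _)
  have hWmem : ∀ x ∈ Icc 0 b, s x ^ p ∈ Icc (0:ℝ) 1 := fun x hx =>
    ⟨Real.rpow_nonneg (hsmem x hx).1 _,
      Real.rpow_le_one (hsmem x hx).1 (hsmem x hx).2 hp0.le⟩
  have hscale : ∀ x ∈ Icc (0:ℝ) (1/2), 2 * b * x ∈ Icc 0 b := by
    intro x hx
    constructor
    · have := hx.1; positivity
    · nlinarith [hx.2]
  have huH : ∀ x ∈ Icc (0:ℝ) (1/2), u x = -(H (s (2*b*x) ^ p)) ^ (1/p) := by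
    intro x hx
    rw [hu]
    congr 1
    rcases hx.1.eq_or_lt with h | h
    · rw [← h, mul_zero, hs0, Real.zero_rpow (by linarith), Real.zero_rpow hp0.ne', hH]
      simp only []
      rw [Real.zero_rpow (by linarith), zero_mul, zero_mul, Real.zero_rpow (by positivity)]
    · have hx2 := hscale x hx
      have hm1 := hsmem _ hx2
      have hm2 := hWmem _ hx2
      rw [hder _ ⟨by positivity, hx2.2⟩, hH]
      simp only []
      have hnn : 0 ≤ 1 - s (2*b*x) ^ p := by linarith [hm2.2]
      rw [Real.mul_rpow (Real.rpow_nonneg hm2.1 _) (Real.rpow_nonneg hnn _),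
        ← Real.rpow_mul hm1.1, ← Real.rpow_mul hm1.1, ← Real.rpow_mul hnn,
        ← Real.rpow_mul hnn]
      congr 2
      · field_simp
      · ring
  have hWmono : ∀ x ∈ Icc (0:ℝ) (1/2), ∀ y ∈ Icc (0:ℝ) (1/2), x < y →
      s (2*b*x) ^ p < s (2*b*y) ^ p := by
    intro x hx y hy hxy
    apply Real.rpow_lt_rpow (hsmem _ (hscale x hx)).1 _ hp0
    apply hsmono (hscale x hx) (hscale y hy)
    nlinarith
  have hmI : m ∈ Icc (0:ℝ) (1/2) := Ioo_subset_Icc_self hm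
  have hWm : s (2*b*m) ^ p = p - 1 := by
    have h1 := hm.1
    have hnn : 0 ≤ 1 - s (2*b*m) ^ p := by linarith [(hWmem _ (hscale m hmI)).2]
    rw [hder _ ⟨by positivity, (hscale m hmI).2⟩, ← Real.rpow_mul hnn,
      one_div_mul_cancel hp0.ne', Real.rpow_one] at hmp
    linarith
  have hWle : ∀ x ∈ Icc (0:ℝ) (1/2), ∀ y ∈ Icc (0:ℝ) (1/2), x ≤ y →
      s (2*b*x) ^ p ≤ s (2*b*y) ^ p := by
    intro x hx y hy hxy
    rcases hxy.lt_or_eq with h | h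
    · exact (hWmono x hx y hy h).le
    · rw [h]
  have hip : 0 < 1 / p := by positivity
  constructor
  · intro x hx y hy hxy
    have hx' : x ∈ Icc (0:ℝ) (1/2) := ⟨hx.1, hx.2.trans hmI.2⟩
    have hy' : y ∈ Icc (0:ℝ) (1/2) := ⟨hy.1, hy.2.trans hmI.2⟩
    rw [huH x hx', huH y hy', neg_lt_neg_iff]
    apply Real.rpow_lt_rpow (hHnn _ (hWmem _ (hscale x hx'))) _ hip
    apply hHm _ _ (hWmono x hx' y hy' hxy)
    · exact ⟨(hWmem _ (hscale x hx')).1, hWm ▸ hWle x hx' m hmI hx.2⟩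
    · exact ⟨(hWmem _ (hscale y hy')).1, hWm ▸ hWle y hy' m hmI hy.2⟩
  · intro x hx y hy hxy
    have hx' : x ∈ Icc (0:ℝ) (1/2) := ⟨hmI.1.trans hx.1, hx.2⟩
    have hy' : y ∈ Icc (0:ℝ) (1/2) := ⟨hmI.1.trans hy.1, hy.2⟩
    rw [huH x hx', huH y hy', neg_lt_neg_iff]
    apply Real.rpow_lt_rpow (hHnn _ (hWmem _ (hscale y hy'))) _ hip
    apply hHa _ _ (hWmono x hx' y hy' hxy)
    · exact ⟨hWm ▸ hWle m hmI x hx' hx.1, (hWmem _ (hscale x hx')).2⟩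
    · exact ⟨hWm ▸ hWle m hmI y hy' hy.1, (hWmem _ (hscale y hy')).2⟩
end

section
/- For p > 2 and all j ≥ 3, |b_j(p)| < (2π_{p'}/(π²(p-1))) · [2 + (π²/2)(p-2)] · j^{-p'}, where p' = p/(p-1) and b_j(p) = 2∫₀¹ cos_p(π_p x) cos(jπx) dx. -/
open Real Set

lemma phi_integrable {p : ℝ} (hp : 2 < p) :
    IntervalIntegrable (fun t : ℝ => (1 - t ^ p) ^ (-(1/p))) MeasureTheory.volume 0 1 := by
  have h1 : IntervalIntegrable (fun t : ℝ => (1 - t) ^ (-(1/p))) MeasureTheory.volume 0 1 := by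
    have h0 : IntervalIntegrable (fun t : ℝ => t ^ (-(1/p))) MeasureTheory.volume 0 1 := by
      apply intervalIntegral.intervalIntegrable_rpow'
      have : 1 / p < 1 := by rw [div_lt_one] <;> linarith
      linarith
    have := h0.comp_sub_left 1
    simp only [sub_zero, sub_self] at this
    exact this.symm
  apply h1.mono_fun
  · apply Measurable.aestronglyMeasurable
    fun_prop
  · rw [uIoc_of_le zero_le_one]
    filter_upwards [MeasureTheory.ae_restrict_mem measurableSet_Ioc] with t ht
    have htp : t ^ p ≤ t := by
      have := Real.rpow_le_rpow_of_exponent_ge ht.1 ht.2 (show (1:ℝ) ≤ p by linarith)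
      simpa using this
    have ht1 : t ^ p ≤ 1 := htp.trans ht.2
    rw [Real.norm_of_nonneg (Real.rpow_nonneg (by linarith) _),
      Real.norm_of_nonneg (Real.rpow_nonneg (by linarith [ht.2]) _)]
    rcases eq_or_lt_of_le ht.2 with h | h
    · subst h; simp
    · apply Real.rpow_le_rpow_of_nonpos
      · linarith
      · linarith
      · have : 0 < 1 / p := by positivity
        linarith

lemma Fp_one {p : ℝ} (hp : 2 < p) : Fp p 1 = π / (p * Real.sin (π / p)) := by
  have hp0 : 0 < p := by linarith
  have hip : 0 < 1 / p := by positivity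
  have hip1 : 1 / p < 1 := by rw [div_lt_one] <;> linarith
  have hre : ((1:ℂ) - ((1/p : ℝ) : ℂ)).re = 1 - 1/p := by
    simp only [Complex.sub_re, Complex.one_re, Complex.ofReal_re]
  have hB := Complex.Gamma_mul_Gamma_eq_betaIntegral (s := ((1/p : ℝ) : ℂ))
    (t := 1 - ((1/p : ℝ) : ℂ)) (by rw [Complex.ofReal_re]; exact hip) (by rw [hre]; linarith)
  rw [Complex.Gamma_mul_Gamma_one_sub, add_sub_cancel, Complex.Gamma_one, one_mul] at hB
  have hI : Complex.betaIntegral ((1/p : ℝ) : ℂ) (1 - ((1/p : ℝ) : ℂ)) = ((p * Fp p 1 : ℝ) : ℂ) := by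
    have key : Complex.betaIntegral ((1/p : ℝ) : ℂ) (1 - ((1/p : ℝ) : ℂ))
       = ((∫ y in (0:ℝ)..1, y ^ (1/p - 1) * (1 - y) ^ (-(1/p)) : ℝ) : ℂ) := by
      rw [Complex.betaIntegral, ← intervalIntegral.integral_ofReal]
      apply intervalIntegral.integral_congr
      intro y hy
      rw [uIcc_of_le zero_le_one] at hy
      simp only
      rw [Complex.ofReal_mul, Complex.ofReal_cpow hy.1, Complex.ofReal_cpow (by linarith [hy.2])]
      push_cast
      congr 2
      ring
    rw [key]
    congr 1
    have := MeasureTheory.integral_comp_rpow_Ioi_of_pos (E := ℝ)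
      (g := (Ioc (0:ℝ) 1).indicator (fun y : ℝ => y ^ (1/p - 1) * (1 - y) ^ (-(1/p)))) hp0
    rw [MeasureTheory.setIntegral_indicator measurableSet_Ioc,
      inter_eq_right.2 (fun x hx => hx.1), ← intervalIntegral.integral_of_le zero_le_one] at this
    rw [← this, Fp, intervalIntegral.integral_of_le zero_le_one,
      ← MeasureTheory.integral_const_mul]
    rw [← inter_eq_right.2 (show Ioc (0:ℝ) 1 ⊆ Ioi 0 from fun x hx => hx.1),
      ← MeasureTheory.setIntegral_indicator measurableSet_Ioc]
    apply MeasureTheory.setIntegral_congr_fun measurableSet_Ioi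
    intro x hx
    have hx0 : 0 < x := hx
    by_cases h1 : x ≤ 1
    · have h2 : x ^ p ≤ 1 := Real.rpow_le_one hx0.le h1 hp0.le
      have h3 : 0 < x ^ p := Real.rpow_pos_of_pos hx0 _
      simp only [smul_eq_mul]
      rw [inter_eq_right.2 (show Ioc (0:ℝ) 1 ⊆ Ioi 0 from fun x hx => hx.1)]
      rw [indicator_of_mem (show x ^ p ∈ Ioc (0:ℝ) 1 from ⟨h3, h2⟩),
        indicator_of_mem (show x ∈ Ioc (0:ℝ) 1 from ⟨hx0, h1⟩)]
      rw [← Real.rpow_mul hx0.le]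
      have : x ^ (p - 1) * x ^ (p * (1/p - 1)) = 1 := by
        rw [← Real.rpow_add hx0, show p - 1 + p * (1/p - 1) = 0 by field_simp; ring, Real.rpow_zero]
      calc p * x ^ (p - 1) * (x ^ (p * (1/p - 1)) * (1 - x ^ p) ^ (-(1/p)))
          = p * (x ^ (p - 1) * x ^ (p * (1/p - 1))) * (1 - x ^ p) ^ (-(1/p)) := by ring
        _ = _ := by rw [this, mul_one]
    · have h2 : 1 < x ^ p := Real.one_lt_rpow (by linarith) hp0
      simp only [smul_eq_mul]
      rw [inter_eq_right.2 (show Ioc (0:ℝ) 1 ⊆ Ioi 0 from fun x hx => hx.1)]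
      rw [indicator_of_notMem (by rintro ⟨_, h⟩; linarith),
        indicator_of_notMem (by rintro ⟨_, h⟩; linarith), mul_zero]
  rw [hI] at hB
  have : π / Real.sin (π / p) = p * Fp p 1 := by
    have h : π * (1 / p) = π / p := by ring
    rw [← Complex.ofReal_mul, ← Complex.ofReal_sin, ← Complex.ofReal_div, h] at hB
    exact_mod_cast hB
  rw [mul_comm p, ← div_div, this]
  field_simp

lemma phi_ge_one {p : ℝ} (hp : 2 < p) {t : ℝ} (h0 : 0 ≤ t) (h1 : t < 1) :
    1 ≤ (1 - t ^ p) ^ (-(1/p)) := by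
  have h3 : 0 ≤ t ^ p := Real.rpow_nonneg h0 _
  have h4 : t ^ p < 1 := Real.rpow_lt_one h0 h1 (by linarith)
  apply Real.one_le_rpow_of_pos_of_le_one_of_nonpos
  · linarith
  · linarith
  · have : 0 < 1 / p := by positivity
    linarith

lemma phi_int_sub {p : ℝ} (hp : 2 < p) {x y : ℝ} (hx : x ∈ Icc (0:ℝ) 1) (hy : y ∈ Icc (0:ℝ) 1) :
    IntervalIntegrable (fun t : ℝ => (1 - t ^ p) ^ (-(1/p))) MeasureTheory.volume x y := by
  apply (phi_integrable hp).mono_set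
  rw [uIcc_of_le zero_le_one]
  exact uIcc_subset_Icc hx hy

lemma Fp_sub {p : ℝ} (hp : 2 < p) {x y : ℝ} (hx : 0 ≤ x) (hxy : x ≤ y) (hy : y ≤ 1) :
    y - x ≤ Fp p y - Fp p x := by
  have hx' : x ∈ Icc (0:ℝ) 1 := ⟨hx, hxy.trans hy⟩
  have hy' : y ∈ Icc (0:ℝ) 1 := ⟨hx.trans hxy, hy⟩
  have h0' : (0:ℝ) ∈ Icc (0:ℝ) 1 := by simp
  rw [Fp, Fp, intervalIntegral.integral_interval_sub_left (phi_int_sub hp h0' hy')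
    (phi_int_sub hp h0' hx')]
  have := intervalIntegral.integral_mono_on_of_le_Ioo (f := fun _ => (1:ℝ)) hxy
    (by simp) (phi_int_sub hp hx' hy')
    (fun t ht => phi_ge_one hp (hx.trans ht.1.le) (ht.2.trans_le hy))
  simpa using this

lemma Fp_cont {p : ℝ} (hp : 2 < p) : ContinuousOn (Fp p) (Icc 0 1) := by
  have := intervalIntegral.continuousOn_primitive_interval
    (f := fun t : ℝ => (1 - t ^ p) ^ (-(1/p))) (a := 0) (b := 1) (μ := MeasureTheory.volume) (by
      rw [uIcc_of_le zero_le_one, ← intervalIntegrable_iff_integrableOn_Icc_of_le zero_le_one]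
      exact phi_integrable hp)
  rwa [uIcc_of_le zero_le_one] at this

lemma Fp_deriv {p : ℝ} (hp : 2 < p) {y : ℝ} (hy : y ∈ Ioo (0:ℝ) 1) :
    HasDerivAt (Fp p) ((1 - y ^ p) ^ (-(1/p))) y := by
  apply intervalIntegral.integral_hasDerivAt_right
  · exact phi_int_sub hp (by simp) ⟨hy.1.le, hy.2.le⟩
  · apply Measurable.stronglyMeasurable ?_ |>.stronglyMeasurableAtFilter
    fun_prop
  · have h4 : y ^ p < 1 := Real.rpow_lt_one hy.1.le hy.2 (by linarith)
    apply ContinuousAt.rpow_const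
    · apply continuousAt_const.sub
      exact Real.continuousAt_rpow_const _ _ (Or.inl hy.1.ne')
    · left; linarith

lemma alt_sum (n : ℕ) : ∀ D : ℕ → ℝ, (∀ k < n, 0 ≤ D k) → (∀ k, k + 1 < n → D (k+1) ≤ D k) → 
    0 < n → 0 ≤ ∑ k ∈ Finset.range n, (-1:ℝ)^k * D k ∧ ∑ k ∈ Finset.range n, (-1:ℝ)^k * D k ≤ D 0 := by
  induction n with
  | zero => intro D _ _ h; omega
  | succ n ih =>
    intro D h0 h1 _
    rw [Finset.sum_range_succ']
    rcases Nat.eq_zero_or_pos n with h | h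
    · subst h; simpa using h0 0 (by omega)
    · have := ih (fun k => D (k+1)) (fun k hk => h0 _ (by omega)) (fun k hk => h1 _ (by omega)) h
      have h2 : ∑ k ∈ Finset.range n, (-1:ℝ)^(k+1) * D (k+1) 
          = - ∑ k ∈ Finset.range n, (-1:ℝ)^k * D (k+1) := by
        rw [← Finset.sum_neg_distrib]
        apply Finset.sum_congr rfl
        intros; ring
      rw [h2]
      have h3 := h1 0 (by omega)
      simp only [zero_add] at *
      constructor <;> simp <;> linarith [this.1, this.2]

lemma concave_shift {K : ℝ → ℝ} {S : ℝ} (hK : ConcaveOn ℝ (Icc 0 S) K) {x y d : ℝ} (hx : 0 ≤ x)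
    (hxy : x ≤ y) (hd : 0 ≤ d) (hy : y + d ≤ S) : K (y + d) - K y ≤ K (x + d) - K x := by
  rcases eq_or_lt_of_le (show 0 ≤ y + d - x by linarith) with h | h
  · have h1 : d = 0 := by linarith
    have h2 : x = y := by linarith
    subst h1; subst h2; simp
  · set L := y + d - x with hL
    have mx : x ∈ Icc 0 S := ⟨hx, by linarith⟩
    have my : y + d ∈ Icc 0 S := ⟨by linarith, hy⟩
    have hl : 0 ≤ d / L := by positivity
    have hl1 : 0 ≤ 1 - d / L := by
      rw [sub_nonneg, div_le_one h]; linarith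
    have a1 := hK.2 mx my hl1 hl (by ring)
    have a2 := hK.2 mx my hl hl1 (by ring)
    simp only [smul_eq_mul] at a1 a2
    have e1 : (1 - d / L) * x + d / L * (y + d) = x + d := by
      have : (1 - d / L) * x + d / L * (y + d) = x + d / L * L := by rw [hL]; ring
      rw [this, div_mul_cancel₀ _ h.ne']
    have e2 : d / L * x + (1 - d / L) * (y + d) = y := by
      have : d / L * x + (1 - d / L) * (y + d) = y + d - d / L * L := by rw [hL]; ring
      rw [this, div_mul_cancel₀ _ h.ne']; ring
    rw [e1] at a1; rw [e2] at a2
    linarith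

lemma block_integral {K : ℝ → ℝ} (k : ℕ)
    (hc : ContinuousOn K (Icc ((k:ℝ) * π - π / 2) (k * π + π / 2))) :
    ∫ x in ((k:ℝ) * π - π / 2)..(k * π + π / 2), K x * Real.sin x = 
      (-1:ℝ)^k * ∫ t in (0:ℝ)..(π/2), (K (k * π + t) - K (k * π - t)) * Real.sin t := by
  have hpi := Real.pi_pos
  have hci : ContinuousOn (fun x => K x * Real.sin x) (Icc ((k:ℝ) * π - π / 2) (k * π + π / 2)) :=
    hc.mul Real.continuous_sin.continuousOn
  have i1 : IntervalIntegrable (fun x => K x * Real.sin x) MeasureTheory.volume ((k:ℝ) * π - π / 2) (k * π) := by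
    apply ContinuousOn.intervalIntegrable
    apply hci.mono
    rw [uIcc_of_le (by linarith)]
    exact Icc_subset_Icc (by linarith) (by linarith)
  have i2 : IntervalIntegrable (fun x => K x * Real.sin x) MeasureTheory.volume ((k:ℝ) * π) (k * π + π/2) := by
    apply ContinuousOn.intervalIntegrable
    apply hci.mono
    rw [uIcc_of_le (by linarith)]
    exact Icc_subset_Icc (by linarith) (by linarith)
  rw [← intervalIntegral.integral_add_adjacent_intervals i1 i2]
  have e1 : ∫ x in ((k:ℝ) * π - π / 2)..(k * π), K x * Real.sin x = 
      ∫ t in (0:ℝ)..(π/2), - ((-1:ℝ)^k * (K (k * π - t) * Real.sin t)) := by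
    have := intervalIntegral.integral_comp_sub_left (a := 0) (b := π/2) (fun x => K x * Real.sin x) ((k:ℝ) * π)
    rw [sub_zero] at this
    rw [← this]
    apply intervalIntegral.integral_congr
    intro t _
    simp only
    rw [Real.sin_sub, Real.sin_nat_mul_pi, Real.cos_nat_mul_pi]
    ring
  have e2 : ∫ x in ((k:ℝ) * π)..(k * π + π / 2), K x * Real.sin x = 
      ∫ t in (0:ℝ)..(π/2), ((-1:ℝ)^k * (K (k * π + t) * Real.sin t)) := by
    have := intervalIntegral.integral_comp_add_left (a := 0) (b := π/2) (fun x => K x * Real.sin x) ((k:ℝ) * π)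
    rw [add_zero] at this
    rw [← this]
    apply intervalIntegral.integral_congr
    intro t _
    simp only
    rw [Real.sin_add, Real.sin_nat_mul_pi, Real.cos_nat_mul_pi]
    ring
  rw [e1, e2, ← intervalIntegral.integral_const_mul, ← intervalIntegral.integral_add]
  · apply intervalIntegral.integral_congr
    intro t _
    simp only
    ring
  · apply ContinuousOn.intervalIntegrable
    rw [uIcc_of_le (by linarith)]
    apply ContinuousOn.neg
    apply ContinuousOn.mul continuousOn_const
    apply ContinuousOn.mul _ Real.continuous_sin.continuousOn
    apply hc.comp (by fun_prop)
    intro t ht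
    constructor <;> linarith [ht.1, ht.2]
  · apply ContinuousOn.intervalIntegrable
    rw [uIcc_of_le (by linarith)]
    apply ContinuousOn.mul continuousOn_const
    apply ContinuousOn.mul _ Real.continuous_sin.continuousOn
    apply hc.comp (by fun_prop)
    intro t ht
    constructor <;> linarith [ht.1, ht.2]

lemma osc_bound {K : ℝ → ℝ} (m : ℕ) (hK : ConcaveOn ℝ (Icc 0 ((m:ℝ) * π + π / 2)) K)
    (hc : ContinuousOn K (Icc 0 ((m:ℝ) * π + π / 2)))
    (hm : MonotoneOn K (Icc 0 ((m:ℝ) * π + π / 2))) (h0 : K 0 = 0) :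
    |∫ x in (0:ℝ)..(m * π + π / 2), K x * Real.sin x| ≤ ∫ x in (0:ℝ)..(π / 2), K x * Real.sin x := by
  have hpi := Real.pi_pos
  set S := (m:ℝ) * π + π / 2 with hS
  have hmp : 0 ≤ (m:ℝ) * π := by positivity
  set D : ℕ → ℝ := fun k => ∫ t in (0:ℝ)..(π/2), (K ((k + 1 : ℕ) * π + t) - K ((k + 1 : ℕ) * π - t)) * Real.sin t with hD
  have kS : ∀ k < m, ((k + 1 : ℕ) : ℝ) * π + π / 2 ≤ S := by
    intro k hk
    have : ((k + 1 : ℕ) : ℝ) ≤ m := by exact_mod_cast hk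
    have := mul_le_mul_of_nonneg_right this hpi.le
    linarith
  have k0 : ∀ k : ℕ, π ≤ ((k + 1 : ℕ) : ℝ) * π := by
    intro k
    have : (1:ℝ) ≤ ((k + 1 : ℕ) : ℝ) := by exact_mod_cast Nat.le_add_left 1 k
    nlinarith
  have hcs : ContinuousOn (fun x => K x * Real.sin x) (Icc 0 S) := hc.mul Real.continuous_sin.continuousOn
  have sum : ∀ n ≤ m, ∫ x in (0:ℝ)..(n * π + π / 2), K x * Real.sin x = 
      (∫ x in (0:ℝ)..(π / 2), K x * Real.sin x) - ∑ k ∈ Finset.range n, (-1:ℝ)^k * D k := by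
    intro n
    induction n with
    | zero => intro _; simp
    | succ n ih =>
      intro hn
      have := ih (by omega)
      have h1 := kS n hn
      have h2 := k0 n
      have h3 : ((n + 1 : ℕ) : ℝ) * π - π / 2 = n * π + π / 2 := by push_cast; ring
      have hb := block_integral (K := K) (n+1) (hc.mono (Icc_subset_Icc (by linarith) h1))
      rw [h3] at hb
      rw [Finset.sum_range_succ, ← sub_sub, ← this,
        ← intervalIntegral.integral_add_adjacent_intervals (b := (n:ℝ) * π + π / 2), hb, hD, pow_succ]
      · ring
      · apply ContinuousOn.intervalIntegrable
        apply hcs.mono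
        rw [uIcc_of_le (by linarith)]
        exact Icc_subset_Icc (by linarith) (by linarith)
      · apply ContinuousOn.intervalIntegrable
        apply hcs.mono
        rw [uIcc_of_le (by linarith)]
        exact Icc_subset_Icc (by linarith) (by linarith)
  have hDint : ∀ k < m, IntervalIntegrable (fun t => (K ((k + 1 : ℕ) * π + t) - K ((k + 1 : ℕ) * π - t)) * Real.sin t) 
      MeasureTheory.volume 0 (π/2) := by
    intro k hk
    have h1 := kS k hk
    have h2 := k0 k
    apply ContinuousOn.intervalIntegrable
    rw [uIcc_of_le (by linarith)]
    apply ContinuousOn.mul _ Real.continuous_sin.continuousOn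
    apply ContinuousOn.sub
    · apply hc.comp (by fun_prop)
      intro t ht
      constructor <;> linarith [ht.1, ht.2]
    · apply hc.comp (by fun_prop)
      intro t ht
      constructor <;> linarith [ht.1, ht.2]
  have hAint : IntervalIntegrable (fun t => K t * Real.sin t) MeasureTheory.volume 0 (π/2) := by
    apply ContinuousOn.intervalIntegrable
    apply hcs.mono
    rw [uIcc_of_le (by linarith)]
    exact Icc_subset_Icc (by linarith) (by linarith)
  have sinn : ∀ t ∈ Icc 0 (π/2), 0 ≤ Real.sin t := fun t ht =>
    Real.sin_nonneg_of_nonneg_of_le_pi ht.1 (by linarith [ht.2])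
  have hA : 0 ≤ ∫ x in (0:ℝ)..(π / 2), K x * Real.sin x := by
    apply intervalIntegral.integral_nonneg (by linarith)
    intro t ht
    apply mul_nonneg _ (sinn t ht)
    rw [← h0]
    exact hm ⟨le_refl _, by linarith⟩ ⟨ht.1, by linarith [ht.2]⟩ ht.1
  rw [sum m le_rfl]
  rcases Nat.eq_zero_or_pos m with h | h
  · rw [h]; simp [abs_of_nonneg hA]
  have hD0 : ∀ k < m, 0 ≤ D k := by
    intro k hk
    have h1 := kS k hk
    have h2 := k0 k
    apply intervalIntegral.integral_nonneg (by linarith)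
    intro t ht
    apply mul_nonneg _ (sinn t ht)
    rw [sub_nonneg]
    apply hm
    · constructor <;> linarith [ht.1, ht.2]
    · constructor <;> linarith [ht.1, ht.2]
    · linarith [ht.1]
  have hD1 : ∀ k, k + 1 < m → D (k+1) ≤ D k := by
    intro k hk
    have h1 := kS (k+1) hk
    have h2 := k0 k
    have h3 : ((k + 1 + 1 : ℕ) : ℝ) * π = ((k + 1 : ℕ) : ℝ) * π + π := by push_cast; ring
    apply intervalIntegral.integral_mono_on (by linarith) (hDint _ hk) (hDint _ (by omega))
    intro t ht
    apply mul_le_mul_of_nonneg_right _ (sinn t ht)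
    have := concave_shift hK (x := ((k + 1 : ℕ) : ℝ) * π - t) (y := ((k + 1 + 1 : ℕ) : ℝ) * π - t) (d := 2 * t)
      (by linarith [ht.2]) (by linarith) (by linarith [ht.1]) (by linarith [ht.2])
    rw [show ((k + 1 : ℕ) : ℝ) * π - t + 2 * t = ((k + 1 : ℕ) : ℝ) * π + t by ring,
      show ((k + 1 + 1 : ℕ) : ℝ) * π - t + 2 * t = ((k + 1 + 1 : ℕ) : ℝ) * π + t by ring] at this
    exact this
  have hD2 : D 0 ≤ 2 * ∫ x in (0:ℝ)..(π / 2), K x * Real.sin x := by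
    have h1 := kS 0 h
    rw [← intervalIntegral.integral_const_mul]
    apply intervalIntegral.integral_mono_on (by linarith) (hDint _ h) (hAint.const_mul 2)
    intro t ht
    rw [← mul_assoc]
    apply mul_le_mul_of_nonneg_right _ (sinn t ht)
    simp only [zero_add, Nat.cast_one, one_mul] at h1 ⊢
    have a1 := concave_shift hK (x := 0) (y := π - t) (d := 2 * t)
      (by linarith [ht.2]) (by linarith [ht.2]) (by linarith [ht.1]) (by linarith [ht.2])
    have a2 := concave_shift hK (x := 0) (y := t) (d := t)
      (by linarith [ht.2]) (by linarith [ht.1]) (by linarith [ht.1]) (by linarith [ht.2])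
    rw [show π - t + 2 * t = π + t by ring, zero_add] at a1
    rw [show t + t = 2 * t by ring, zero_add] at a2
    linarith
  have := alt_sum m D hD0 hD1 h
  rw [abs_le]
  constructor <;> linarith [this.1, this.2]

lemma sin_moment (r : ℝ) : ∫ t in (0:ℝ)..(π / 2), (1 + r * (t - 1)) * Real.sin t = 1 := by
  have h : ∀ t ∈ uIcc 0 (π/2), HasDerivAt (fun t => - (1 + r * (t - 1)) * Real.cos t + r * Real.sin t)
      ((1 + r * (t - 1)) * Real.sin t) t := by
    intro t _
    have := (((((hasDerivAt_id t).sub_const 1).const_mul r).const_add 1).neg.mul (Real.hasDerivAt_cos t)).add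
      ((Real.hasDerivAt_sin t).const_mul r)
    have h2 : HasDerivAt (fun t => - (1 + r * (t - 1)) * Real.cos t + r * Real.sin t) _ t := this
    refine h2.congr_deriv ?_
    simp
    ring
  rw [intervalIntegral.integral_eq_sub_of_hasDerivAt h]
  · simp
  · apply Continuous.intervalIntegrable; fun_prop

lemma final_ineq {q P : ℝ} (hq : 1 < q) (hP : 1 ≤ P) :
    (2 * P / π) ^ (1/q) < (P / q) * (2 / π + π / 2 * (q - 1)) := by
  have hpi := Real.pi_pos
  have hpi3 := Real.pi_gt_three
  set X := 2 * P / π with hX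
  have hX0 : 0 < X := by positivity
  have h1 : X ^ (1/q) ≤ 1 + 1/q * (X - 1) := by
    have := rpow_one_add_le_one_add_mul_self (s := X - 1) (by linarith) (p := 1/q) (by positivity)
      (by rw [div_le_one] <;> linarith)
    simpa using this
  have h2 : (P / q) * (2 / π + π / 2 * (q - 1)) = (1/q) * (X + P * π / 2 * (q - 1)) := by
    rw [hX]; field_simp
  have h3 : 1 + 1/q * (X - 1) = (1/q) * (X + 1 * (q - 1)) := by field_simp; ring
  rw [h2]
  refine h1.trans_lt ?_
  rw [h3]
  apply mul_lt_mul_of_pos_left _ (by positivity)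
  have : 1 < P * π / 2 := by nlinarith
  nlinarith

lemma s_main {p : ℝ} (hp : 2 < p) {s : ℝ → ℝ} (hinv₁ : ∀ y ∈ Icc (0:ℝ) 1, s (Fp p y) = y) :
    (∀ x ∈ Icc (0:ℝ) (Fp p 1), s x ∈ Icc (0:ℝ) 1 ∧ Fp p (s x) = x) ∧
    MonotoneOn s (Icc 0 (Fp p 1)) ∧ ContinuousOn s (Icc 0 (Fp p 1)) ∧
    (∀ x ∈ Ioo (0:ℝ) (Fp p 1), s x ∈ Ioo (0:ℝ) 1) ∧
    (∀ x ∈ Ioo (0:ℝ) (Fp p 1), HasDerivAt s ((1 - s x ^ p) ^ (1/p)) x) ∧ s 0 = 0 := by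
  have F0 : Fp p 0 = 0 := by simp [Fp]
  have A : ∀ x ∈ Icc (0:ℝ) (Fp p 1), s x ∈ Icc (0:ℝ) 1 ∧ Fp p (s x) = x := by
    intro x hx
    have := intermediate_value_Icc zero_le_one (Fp_cont hp)
    rw [F0] at this
    obtain ⟨y, hy, rfl⟩ := this hx
    rw [hinv₁ y hy]
    exact ⟨hy, rfl⟩
  have M : MonotoneOn s (Icc 0 (Fp p 1)) := by
    intro x hx y hy hxy
    by_contra! h
    have := Fp_sub hp (A y hy).1.1 h.le (A x hx).1.2
    rw [(A x hx).2, (A y hy).2] at this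
    linarith
  have C : ContinuousOn s (Icc 0 (Fp p 1)) := by
    have : LipschitzOnWith 1 s (Icc 0 (Fp p 1)) := by
      apply LipschitzOnWith.of_le_add
      intro x hx y hy
      rw [Real.dist_eq]
      rcases le_total x y with h | h
      · have := M hx hy h
        linarith [abs_nonneg (x - y)]
      · have := Fp_sub hp (A y hy).1.1 (M hy hx h) (A x hx).1.2
        rw [(A x hx).2, (A y hy).2] at this
        linarith [le_abs_self (x - y)]
    exact this.continuousOn
  have I : ∀ x ∈ Ioo (0:ℝ) (Fp p 1), s x ∈ Ioo (0:ℝ) 1 := by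
    intro x hx
    have h := A x (Ioo_subset_Icc_self hx)
    refine ⟨lt_of_le_of_ne h.1.1 ?_, lt_of_le_of_ne h.1.2 ?_⟩
    · intro h'
      have h2 := h.2
      rw [← h', F0] at h2
      linarith [hx.1]
    · intro h'
      have h2 := h.2
      rw [h'] at h2
      linarith [hx.2]
  refine ⟨A, M, C, I, ?_, ?_⟩
  · intro x hx
    have hsx := I x hx
    have h4 : s x ^ p < 1 := Real.rpow_lt_one hsx.1.le hsx.2 (by linarith)
    have hn : Icc (0:ℝ) (Fp p 1) ∈ nhds x := Icc_mem_nhds hx.1 hx.2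
    have := HasDerivAt.of_local_left_inverse (C.continuousAt hn) (Fp_deriv hp hsx)
      (Real.rpow_pos_of_pos (by linarith) _).ne'
      (by filter_upwards [hn] with y hy using (A y hy).2)
    rwa [← Real.rpow_neg (by linarith), neg_neg] at this
  · have := hinv₁ 0 (by simp)
    rwa [F0] at this

lemma C_main {p : ℝ} (hp : 2 < p) {s : ℝ → ℝ} (hinv₁ : ∀ y ∈ Icc (0:ℝ) 1, s (Fp p y) = y) :
    ContinuousOn (fun x => (1 - s x ^ p) ^ (1/p)) (Icc 0 (Fp p 1)) ∧
    AntitoneOn (fun x => (1 - s x ^ p) ^ (1/p)) (Icc 0 (Fp p 1)) ∧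
    ConcaveOn ℝ (Icc 0 (Fp p 1)) (fun x => (1 - s x ^ p) ^ (1/p)) ∧
    (∀ x ∈ Icc (0:ℝ) (Fp p 1), (1 - s x ^ p) ^ (1/p) ≤ ((p - 1) * (Fp p 1 - x)) ^ (1/(p-1))) := by
  obtain ⟨A, M, C, I, Dv, -⟩ := s_main hp hinv₁
  have hp0 : 0 < p := by linarith
  have hip : 0 < 1 / p := by positivity
  have hq : 0 < p - 1 := by linarith
  have pw : ∀ x ∈ Icc (0:ℝ) (Fp p 1), 0 ≤ s x ^ p ∧ s x ^ p ≤ 1 := fun x hx =>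
    ⟨Real.rpow_nonneg (A x hx).1.1 _, Real.rpow_le_one (A x hx).1.1 (A x hx).1.2 hp0.le⟩
  have Cc : ContinuousOn (fun x => (1 - s x ^ p) ^ (1/p)) (Icc 0 (Fp p 1)) := by
    apply ContinuousOn.rpow_const _ (fun _ _ => Or.inr hip.le)
    exact continuousOn_const.sub (C.rpow_const (fun _ _ => Or.inr hp0.le))
  have Ca : AntitoneOn (fun x => (1 - s x ^ p) ^ (1/p)) (Icc 0 (Fp p 1)) := by
    intro x hx y hy hxy
    have h1 := Real.rpow_le_rpow (A x hx).1.1 (M hx hy hxy) hp0.le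
    exact Real.rpow_le_rpow (by linarith [(pw y hy).2]) (by linarith) hip.le
  have Ipos : ∀ x ∈ Ioo (0:ℝ) (Fp p 1), 0 < 1 - s x ^ p := fun x hx => by
    have := Real.rpow_lt_one (I x hx).1.le (I x hx).2 hp0
    linarith
  -- derivative of `(1 - s^p)^a`
  have Dg : ∀ a : ℝ, ∀ x ∈ Ioo (0:ℝ) (Fp p 1), HasDerivAt (fun x => (1 - s x ^ p) ^ a)
      (- (a * p * (s x ^ (p-1) * (1 - s x ^ p) ^ (a - 1 + 1/p)))) x := by
    intro a x hx
    have h1 := ((Dv x hx).rpow_const (p := p) (Or.inl (I x hx).1.ne')).const_sub 1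
    have h2 := h1.rpow_const (p := a) (Or.inl (Ipos x hx).ne')
    convert h2 using 1
    rw [Real.rpow_add (Ipos x hx)]
    ring
  refine ⟨Cc, Ca, ?_, ?_⟩
  · apply AntitoneOn.concaveOn_of_deriv (convex_Icc _ _) Cc
    · rw [interior_Icc]
      intro x hx
      exact (Dg _ x hx).differentiableAt.differentiableWithinAt
    · rw [interior_Icc]
      intro x hx y hy hxy
      rw [(Dg _ x hx).deriv, (Dg _ y hy).deriv]
      have h0 := M (Ioo_subset_Icc_self hx) (Ioo_subset_Icc_self hy) hxy
      have h1 := Real.rpow_le_rpow (I x hx).1.le h0 hp0.le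
      apply neg_le_neg
      apply mul_le_mul_of_nonneg_left _ (by positivity)
      apply mul_le_mul
      · exact Real.rpow_le_rpow (I x hx).1.le h0 hq.le
      · apply Real.rpow_le_rpow_of_nonpos (Ipos y hy) (by linarith)
        have : 1 / p < 1 / 2 := one_div_lt_one_div_of_lt (by norm_num) hp
        linarith
      · exact Real.rpow_nonneg (Ipos x hx).le _
      · exact Real.rpow_nonneg (I y hy).1.le _
  · intro x hx
    have h1p : 1 / p < 1 := by rw [div_lt_one] <;> linarith
    have Mo : MonotoneOn (fun x => (1 - s x ^ p) ^ (1 - 1/p) + (p - 1) * x) (Icc 0 (Fp p 1)) := by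
      apply monotoneOn_of_deriv_nonneg (convex_Icc _ _)
      · apply ContinuousOn.add _ (by fun_prop)
        apply ContinuousOn.rpow_const _ (fun _ _ => Or.inr (by linarith))
        exact continuousOn_const.sub (C.rpow_const (fun _ _ => Or.inr hp0.le))
      · rw [interior_Icc]
        intro x hx
        exact ((Dg _ x hx).add ((hasDerivAt_id x).const_mul (p-1))).differentiableAt.differentiableWithinAt
      · rw [interior_Icc]
        intro x hx
        have hd := ((Dg (1 - 1/p) x hx).add ((hasDerivAt_id x).const_mul (p-1))).deriv
        have hd' : deriv (fun x => (1 - s x ^ p) ^ (1 - 1/p) + (p - 1) * x) x = 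
          - ((1 - 1/p) * p * (s x ^ (p-1) * (1 - s x ^ p) ^ (1 - 1/p - 1 + 1/p))) + (p - 1) * 1 := hd
        rw [hd', show 1 - 1/p - 1 + 1/p = 0 by ring, Real.rpow_zero,
          show (1 - 1/p) * p = p - 1 by field_simp]
        have := Real.rpow_le_one (I x hx).1.le (I x hx).2.le hq.le
        nlinarith
    have hB : Fp p 1 ∈ Icc 0 (Fp p 1) := ⟨hx.1.trans hx.2, le_rfl⟩
    have h2 := Mo hx hB hx.2
    have h3 : s (Fp p 1) = 1 := hinv₁ 1 (by simp)
    simp only [h3, Real.one_rpow, sub_self] at h2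
    rw [Real.zero_rpow (by linarith)] at h2
    have h4 : (1 - s x ^ p) ^ (1 - 1/p) ≤ (p - 1) * (Fp p 1 - x) := by linarith
    have h5 := Real.rpow_le_rpow (Real.rpow_nonneg (by linarith [(pw x hx).2]) _) h4
      (show 0 ≤ 1/(p-1) by positivity)
    rwa [← Real.rpow_mul (by linarith [(pw x hx).2]),
      show (1 - 1/p) * (1/(p-1)) = 1/p by field_simp] at h5

/-- the odd-case bound -/
lemma K_bound {p : ℝ} (hp : 2 < p) {s : ℝ → ℝ} (hinv₁ : ∀ y ∈ Icc (0:ℝ) 1, s (Fp p y) = y)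
    (m : ℕ) :
    |∫ x in (0:ℝ)..(1/2), (1 - s (pip p * x) ^ p) ^ (1/p) * Real.cos (((2 * m + 1 : ℕ) : ℝ) * π * x)|
      ≤ 1 / (((2 * m + 1 : ℕ) : ℝ) * π) * ((2 * ((p - 1) * Fp p 1) / π) ^ (1/(p-1)) *
        (((2 * m + 1 : ℕ) : ℝ)) ^ (-(1/(p-1)))) := by
  obtain ⟨Cc, Ca, Cv, Cb⟩ := C_main hp hinv₁
  have hpi := Real.pi_pos
  have hq : 0 < p - 1 := by linarith
  set j : ℝ := ((2 * m + 1 : ℕ) : ℝ) with hj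
  have hj0 : 0 < j := by rw [hj]; positivity
  have hj2 : (m:ℝ) * π + π / 2 = j * π / 2 := by rw [hj]; push_cast; ring
  set B := Fp p 1 with hB
  have hB1 : 1 ≤ B := by
    have := Fp_sub hp le_rfl zero_le_one le_rfl
    have F0 : Fp p 0 = 0 := by simp [Fp]
    rw [F0] at this
    linarith
  set g : ℝ → ℝ := fun x => (1 - s x ^ p) ^ (1/p) with hg
  -- affine change of variable
  set e : ℝ → ℝ := fun θ => B - 2 * B / (j * π) * θ with he
  have hcoef : 0 < 2 * B / (j * π) := by positivity
  have hend : 2 * B / (j * π) * (m * π + π / 2) = B := by rw [hj2]; field_simp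
  have eM : MapsTo e (Icc 0 ((m:ℝ) * π + π / 2)) (Icc 0 B) := by
    intro θ hθ
    have h1 := mul_le_mul_of_nonneg_left hθ.2 hcoef.le
    rw [hend] at h1
    have h2 := mul_nonneg hcoef.le hθ.1
    constructor <;> simp only [he] <;> linarith
  set K : ℝ → ℝ := fun θ => g (e θ) with hK
  have Kc : ContinuousOn K (Icc 0 ((m:ℝ) * π + π / 2)) := Cc.comp (by fun_prop) eM
  have Km : MonotoneOn K (Icc 0 ((m:ℝ) * π + π / 2)) := by
    intro x hx y hy hxy
    apply Ca (eM hy) (eM hx)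
    simp only [he]
    have := mul_le_mul_of_nonneg_left hxy hcoef.le
    linarith
  have Kv : ConcaveOn ℝ (Icc 0 ((m:ℝ) * π + π / 2)) K := by
    refine ⟨convex_Icc _ _, ?_⟩
    intro x hx y hy a b ha hb hab
    have := Cv.2 (eM hx) (eM hy) ha hb hab
    have h2 : a • e x + b • e y = e (a • x + b • y) := by
      simp only [he, smul_eq_mul]
      have : B = (a + b) * B := by rw [hab, one_mul]
      linear_combination (-1:ℝ) * this
    rw [h2] at this
    exact this
  have K0 : K 0 = 0 := by
    simp only [hK, he, hg, mul_zero, sub_zero]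
    have h3 : s B = 1 := hinv₁ 1 (by simp)
    rw [h3, Real.one_rpow, sub_self, Real.zero_rpow]
    positivity
  have hosc := osc_bound m Kv Kc Km K0
  set r := 1/(p-1) with hr
  have hr0 : 0 < r := by positivity
  have hr1 : r ≤ 1 := by rw [hr, div_le_one] <;> linarith
  set W := (2 * ((p - 1) * B) / (j * π)) ^ r with hW
  have hW0 : 0 ≤ W := by positivity
  have hK1 : ∫ x in (0:ℝ)..(π / 2), K x * Real.sin x ≤ W := by
    have hmp : 0 ≤ (m:ℝ) * π := by positivity
    have : ∫ x in (0:ℝ)..(π / 2), K x * Real.sin x ≤ 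
        ∫ x in (0:ℝ)..(π / 2), W * ((1 + r * (x - 1)) * Real.sin x) := by
      apply intervalIntegral.integral_mono_on (by linarith)
      · apply ContinuousOn.intervalIntegrable
        rw [uIcc_of_le (by linarith)]
        exact (Kc.mono (Icc_subset_Icc le_rfl (by linarith))).mul Real.continuous_sin.continuousOn
      · apply Continuous.intervalIntegrable; fun_prop
      · intro θ hθ
        rw [← mul_assoc]
        apply mul_le_mul_of_nonneg_right _
          (Real.sin_nonneg_of_nonneg_of_le_pi hθ.1 (by linarith [hθ.2]))
        have h1 := Cb (e θ) (eM ⟨hθ.1, by linarith [hθ.2]⟩)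
        have h2 : (p - 1) * (B - e θ) = 2 * ((p - 1) * B) / (j * π) * θ := by
          simp only [he]; ring
        rw [h2, Real.mul_rpow (by positivity) hθ.1] at h1
        refine h1.trans (mul_le_mul_of_nonneg_left ?_ hW0)
        have := rpow_one_add_le_one_add_mul_self (s := θ - 1) (by linarith [hθ.1]) hr0.le hr1
        simpa using this
    rw [intervalIntegral.integral_const_mul, sin_moment, mul_one] at this
    exact this
  have hWe : W = (2 * ((p - 1) * B) / π) ^ r * j ^ (-r) := by
    rw [hW, Real.rpow_neg hj0.le, ← Real.inv_rpow hj0.le, ← Real.mul_rpow (by positivity) (by positivity)]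
    congr 1
    field_simp
  rw [← hWe]
  have hch : ∫ x in (0:ℝ)..(1/2), g (pip p * x) * Real.cos (j * π * x) = 
      (-1:ℝ)^m * (1 / (j * π) * ∫ x in (0:ℝ)..(m * π + π / 2), K x * Real.sin x) := by
    have h1 := intervalIntegral.integral_comp_sub_left (a := 0) (b := 1/2)
      (fun x => g (pip p * x) * Real.cos (j * π * x)) (1/2)
    have h2 := intervalIntegral.integral_comp_mul_left (a := 0) (b := 1/2) (c := j * π)
      (fun x => K x * Real.sin x) (by positivity)
    rw [sub_self, sub_zero] at h1
    rw [mul_zero, smul_eq_mul, show j * π * (1/2) = m * π + π / 2 by rw [hj2]; ring] at h2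
    rw [← h1, one_div (j * π), ← h2, ← intervalIntegral.integral_const_mul]
    apply intervalIntegral.integral_congr
    intro y _
    simp only [hK, he]
    have e1 : pip p * (1/2 - y) = B - 2 * B / (j * π) * (j * π * y) := by
      rw [pip]; field_simp; ring
    have e2 : Real.cos (j * π * (1/2 - y)) = (-1:ℝ)^m * Real.sin (j * π * y) := by
      rw [show j * π * (1/2 - y) = m * π - (j * π * y - π / 2) by linear_combination -hj2,
        Real.cos_sub, Real.sin_nat_mul_pi, Real.cos_nat_mul_pi, Real.cos_sub_pi_div_two]
      ring
    rw [e1, e2]; ring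
  have hch' : ∫ x in (0:ℝ)..(1/2), (1 - s (pip p * x) ^ p) ^ (1/p) * Real.cos (j * π * x) = 
      (-1:ℝ)^m * (1 / (j * π) * ∫ x in (0:ℝ)..(m * π + π / 2), K x * Real.sin x) := hch
  rw [hch', abs_mul, abs_pow, abs_neg, abs_one, one_pow, one_mul, abs_mul, abs_of_pos (by positivity)]
  exact mul_le_mul_of_nonneg_left (hosc.trans hK1) (by positivity)

theorem fourier_coeff_bound_p_gt_two (p : ℝ) (hp : 2 < p) (s : ℝ → ℝ)
    (hinv₁ : ∀ y ∈ Icc (0:ℝ) 1, s (Fp p y) = y)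
    (hinv₂ : ∀ x ∈ Icc (0:ℝ) (pip p / 2), Fp p (s x) = x)
    (hodd : ∀ x, s (-x) = -s x)
    (hsym : ∀ x, s (pip p / 2 - x) = s (pip p / 2 + x))
    (j : ℕ) (hj : 3 ≤ j) :
    |2 * ∫ x in (0:ℝ)..1, deriv s (pip p * x) * Real.cos (j * π * x)| <
      2 * (2 * π / ((p / (p - 1)) * Real.sin (π / (p / (p - 1))))) / (π^2 * (p - 1)) *
        (2 + π^2 / 2 * (p - 2)) * (j : ℝ) ^ (-(p / (p - 1))) := by
  have hpi := Real.pi_pos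
  have hp0 : 0 < p := by linarith
  have hq : 0 < p - 1 := by linarith
  have hj0 : (0:ℝ) < j := by exact_mod_cast (by omega : 0 < j)
  have hB1 : 1 ≤ Fp p 1 := by
    have := Fp_sub hp le_rfl zero_le_one le_rfl
    have F0 : Fp p 0 = 0 := by simp [Fp]
    rw [F0] at this
    linarith
  have hBf := Fp_one hp
  have hpip : 0 < pip p := by rw [pip]; linarith
  have hsin : Real.sin (π / (p / (p - 1))) = Real.sin (π / p) := by
    rw [← Real.sin_pi_sub]
    congr 1
    field_simp
    ring
  have hc1 : 2 * π / ((p / (p - 1)) * Real.sin (π / (p / (p - 1)))) = 2 * ((p - 1) * Fp p 1) := by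
    rw [hsin, hBf]
    have hs : 0 < Real.sin (π / p) := by
      apply Real.sin_pos_of_pos_of_lt_pi (by positivity)
      rw [div_lt_iff₀ hp0]; nlinarith
    field_simp
  rw [hc1]
  set P := (p - 1) * Fp p 1 with hP
  have hP1 : 1 ≤ P := by rw [hP]; nlinarith
  have hjp : (j:ℝ) ^ (-(p / (p - 1))) = 1 / j * (j:ℝ) ^ (-(1/(p-1))) := by
    rw [show -(p / (p - 1)) = -1 + -(1/(p-1)) by field_simp; ring, Real.rpow_add hj0,
      Real.rpow_neg_one, one_div (j:ℝ)]
  rw [hjp]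
  have hR : 0 < (j:ℝ) ^ (-(1/(p-1))) := Real.rpow_pos_of_pos hj0 _
  -- the integrand
  obtain ⟨A, M, C, I, Dv, -⟩ := s_main hp hinv₁
  obtain ⟨Cc, -, -, -⟩ := C_main hp hinv₁
  have hmap : ∀ x ∈ Ioo (0:ℝ) (1/2), pip p * x ∈ Ioo 0 (Fp p 1) := by
    intro x hx
    refine ⟨mul_pos hpip hx.1, ?_⟩
    have := mul_lt_mul_of_pos_left hx.2 hpip
    rw [pip] at this ⊢
    linarith
  have hd : ∀ x ∈ Ioo (0:ℝ) (1/2), deriv s (pip p * x) * Real.cos (j * π * x) =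
      (1 - s (pip p * x) ^ p) ^ (1/p) * Real.cos (j * π * x) := fun x hx => by
    rw [(Dv _ (hmap x hx)).deriv]
  have hrefl : ∀ x, deriv s (pip p - x) = - deriv s x := by
    intro x
    have h1 : s = fun x => s (pip p - x) := by
      funext x
      have := hsym (x - pip p / 2)
      rw [show pip p / 2 - (x - pip p / 2) = pip p - x by ring, add_sub_cancel] at this
      exact this.symm
    have h2 := deriv_comp_const_sub s (pip p) x
    rw [← h1] at h2
    linarith
  set G : ℝ → ℝ := fun x => deriv s (pip p * x) * Real.cos (j * π * x) with hG
  have hGr : ∀ x, G (1 - x) = -(-1:ℝ)^j * G x := by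
    intro x
    simp only [hG]
    rw [show pip p * (1 - x) = pip p - pip p * x by ring, hrefl,
      show (j:ℝ) * π * (1 - x) = j * π - j * π * x by ring, Real.cos_sub, Real.sin_nat_mul_pi,
      Real.cos_nat_mul_pi]
    ring
  have i0 : IntervalIntegrable (fun x => (1 - s (pip p * x) ^ p) ^ (1/p) * Real.cos (j * π * x))
      MeasureTheory.volume 0 (1/2) := by
    apply ContinuousOn.intervalIntegrable
    rw [uIcc_of_le (by norm_num)]
    apply ContinuousOn.mul _ (by fun_prop)
    apply Cc.comp (f := fun x => pip p * x) (by fun_prop)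
    intro x hx
    refine ⟨mul_nonneg hpip.le hx.1, ?_⟩
    have := mul_le_mul_of_nonneg_left hx.2 hpip.le
    rw [pip] at this ⊢
    linarith
  have hae : ∀ᵐ x ∂MeasureTheory.volume, x ∈ uIoc (0:ℝ) (1/2) →
      (1 - s (pip p * x) ^ p) ^ (1/p) * Real.cos (j * π * x) = G x := by
    have : ∀ᵐ x ∂(MeasureTheory.volume : MeasureTheory.Measure ℝ), x ≠ 1/2 :=
      MeasureTheory.Measure.ae_ne _ _
    filter_upwards [this] with x hx hx2
    rw [uIoc_of_le (by norm_num)] at hx2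
    exact (hd x ⟨hx2.1, lt_of_le_of_ne hx2.2 hx⟩).symm
  have i1 : IntervalIntegrable G MeasureTheory.volume 0 (1/2) := by
    apply i0.congr_ae
    rw [Filter.EventuallyEq, MeasureTheory.ae_restrict_iff' measurableSet_uIoc]
    exact hae
  have i2 : IntervalIntegrable G MeasureTheory.volume (1/2) 1 := by
    have h := (i1.comp_sub_left 1).symm
    norm_num at h
    have h2 := h.const_mul (-(-1:ℝ)^j)
    have : G = fun x => -(-1:ℝ)^j * G (1 - x) := by
      funext x
      have := hGr (1 - x)
      rwa [sub_sub_cancel] at this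
    rw [this]
    simpa using h2
  have hI : ∫ x in (0:ℝ)..1, G x = (1 - (-1:ℝ)^j) * ∫ x in (0:ℝ)..(1/2), G x := by
    rw [← intervalIntegral.integral_add_adjacent_intervals i1 i2]
    have h := intervalIntegral.integral_comp_sub_left (a := 0) (b := 1/2) G 1
    rw [sub_zero, show (1:ℝ) - 1/2 = 1/2 by norm_num] at h
    have h2 : ∫ x in (1/2:ℝ)..1, G x = -(-1:ℝ)^j * ∫ x in (0:ℝ)..(1/2), G x := by
      rw [← h, ← intervalIntegral.integral_const_mul]
      exact intervalIntegral.integral_congr (fun x _ => hGr x)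
    rw [h2]; ring
  have hI2 : ∫ x in (0:ℝ)..(1/2), G x =
      ∫ x in (0:ℝ)..(1/2), (1 - s (pip p * x) ^ p) ^ (1/p) * Real.cos (j * π * x) := by
    symm
    exact intervalIntegral.integral_congr_ae hae
  rw [hI]
  rcases Nat.even_or_odd j with he | ho
  · rw [he.neg_one_pow]
    simp only [sub_self, zero_mul, mul_zero, abs_zero]
    have : 0 < p - 2 := by linarith
    positivity
  · rw [ho.neg_one_pow, hI2]
    obtain ⟨m, hm⟩ := ho
    have hb := K_bound hp hinv₁ m
    rw [← hm, ← hP] at hb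
    have hf := final_ineq (q := p - 1) (by linarith) hP1
    rw [show (2:ℝ) * ((1 - -1) * ∫ x in (0:ℝ)..(1/2), (1 - s (pip p * x) ^ p) ^ (1/p) * Real.cos (j * π * x))
      = 4 * ∫ x in (0:ℝ)..(1/2), (1 - s (pip p * x) ^ p) ^ (1/p) * Real.cos (j * π * x) by ring,
      abs_mul, abs_of_pos (by norm_num : (0:ℝ) < 4)]
    have hpos : 0 < 4 / (j * π) * (j:ℝ) ^ (-(1/(p-1))) := by positivity
    have h1 := mul_lt_mul_of_pos_right hf hpos
    calc _ ≤ 4 * (1 / (j * π) * ((2 * P / π) ^ (1/(p-1)) * (j:ℝ) ^ (-(1/(p-1))))) :=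
          mul_le_mul_of_nonneg_left hb (by norm_num)
      _ = (2 * P / π) ^ (1/(p-1)) * (4 / (j * π) * (j:ℝ) ^ (-(1/(p-1)))) := by ring
      _ < _ := h1
      _ = _ := by
        field_simp
        ring
end
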